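/- Let t₁₂(n!) denote the least nonzero digit of n! in base 12. For y ∈ {4, 8}, the characteristic sequence n ↦ [t₁₂(n!) = y] is not k-automatic for any integer k ≥ 2. (One may assume as input the following facts, proved elsewhere: (i) there is a 3-automatic sequence b with values in {4,8} coinciding with t₁₂(n!) almost everywhere, where b(n) = 4 if the digits 2,3,4,6,7 appear among the base-9 digits of n in total an even number of times and b(n) = 8 otherwise; (ii) [t₁₂(n!) = y] is not 3-automatic for y ∈ {4,8}.) -/

import Mathlib

open Filter

/-- The upper density of a set of natural numbers:
`limsup_{n → ∞} |A ∩ [0,n)| / n`. -/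
noncomputable def upperDensity (A : Set ℕ) : ℝ :=
  limsup (fun n : ℕ => (Nat.card ↥(A ∩ Set.Iio n) : ℝ) / n) atTop

/-- The base-`k` representation of `n` as a word over `Σ_k = Fin k`, read starting
from the leading digit, with no leading zeros (junk value `[]` if `k ≤ 1`;
the representation of `0` is the empty word). -/
def kRepr (k n : ℕ) : List (Fin k) :=
  if h : 1 < k then
    (Nat.digits k n).reverse.pmap (fun d hd => (⟨d, hd⟩ : Fin k))
      (fun d hd => Nat.digits_lt_base h (List.mem_reverse.mp hd))
  else []

/-- Run a deterministic automaton with transition function `δ` from the state `s`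
on the word `w`, reading `w` from the left: the extended transition function `δ*`. -/
def run {S : Type*} {k : ℕ} (δ : S → Fin k → S) (s : S) (w : List (Fin k)) : S :=
  w.foldl δ s

/-- A sequence `a : ℕ → Ω` is `k`-automatic if it is produced by a deterministic
finite automaton with output, reading the base-`k` representation of the input
starting from the leading digit. -/
def IsAutomatic {Ω : Type*} (k : ℕ) (a : ℕ → Ω) : Prop :=
  ∃ (S : Type) (_ : Fintype S) (δ : S → Fin k → S) (s₀ : S) (τ : S → Ω),
    ∀ n : ℕ, a n = τ (run δ s₀ (kRepr k n))

/-- Two integers are multiplicatively independent if no nontrivial powers of them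
coincide (equivalently, they are not both powers of a common integer). -/
def MultIndep (k l : ℕ) : Prop :=
  ∀ i j : ℕ, k ^ i = l ^ j → i = 0 ∧ j = 0

/-- The finite word `w` occurs in the sequence `a` at position `i`. -/
def OccursAt {Ω : Type*} (a : ℕ → Ω) (w : List Ω) (i : ℕ) : Prop :=
  ∀ (j : ℕ) (h : j < w.length), w.get ⟨j, h⟩ = a (i + j)

/-- The finite word `w` is a factor of the sequence `a`. -/
def IsFactor {Ω : Type*} (a : ℕ → Ω) (w : List Ω) : Prop :=
  ∃ i : ℕ, OccursAt a w i

/-- A sequence is uniformly recurrent if each of its factors occurs in it with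
bounded gaps. -/
def UniformlyRecurrent {Ω : Type*} (a : ℕ → Ω) : Prop :=
  ∀ w : List Ω, IsFactor a w →
    ∃ C : ℕ, ∀ N : ℕ, ∃ i : ℕ, N ≤ i ∧ i ≤ N + C ∧ OccursAt a w i

/-- A strongly connected component of an automaton: a nonempty set of states closed
under all transitions and such that each of its states can be reached from each
other one by some word. -/
def IsSCC {S : Type*} {k : ℕ} (δ : S → Fin k → S) (C : Set S) : Prop :=
  C.Nonempty ∧ (∀ s ∈ C, ∀ u : Fin k, δ s u ∈ C) ∧
    ∀ s ∈ C, ∀ s' ∈ C, ∃ w : List (Fin k), run δ s w = s'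

/-- The least nonzero digit of `m` in base `k` (the nonzero digit of lowest order);
junk value `0` if there is none. -/
def leastNonzeroDigit (k m : ℕ) : ℕ :=
  ((Nat.digits k m).filter (fun d => d != 0)).headD 0

/-- The total number of occurrences of the digits `2, 3, 4, 6, 7` among the
base-`9` digits of `n`. -/
def specialDigitCount (n : ℕ) : ℕ :=
  ((Nat.digits 9 n).filter (fun d => decide (d ∈ ([2, 3, 4, 6, 7] : List ℕ)))).length

open Topology

section Automatic

theorem kRepr_zero (k : ℕ) : kRepr k 0 = [] := by
  unfold kRepr
  split_ifs <;> simp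

theorem kRepr_mul_add {k : ℕ} (hk : 2 ≤ k) {n i : ℕ} (hi : i < k) (h : n ≠ 0 ∨ i ≠ 0) :
    kRepr k (k * n + i) = kRepr k n ++ [⟨i, hi⟩] := by
  have hk' : 1 < k := hk
  have hdig : Nat.digits k (k * n + i) = i :: Nat.digits k n := by
    rw [add_comm]
    exact Nat.digits_add k hk' i n hi h.symm
  simp [kRepr, hk', hdig, List.pmap_append]

/-- A sequence is `k`-automatic iff it factors through a finite colouring of `ℕ`
for which the colour of `k * n + i` depends only on the colour of `n` and on `i`. -/
theorem isAutomatic_iff_exists_coloring {Ω : Type*} {k : ℕ} (hk : 2 ≤ k) (a : ℕ → Ω) :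
    IsAutomatic k a ↔ ∃ (X : Type) (_ : Finite X) (φ : ℕ → X) (τ : X → Ω),
      (∀ n n' i, i < k → φ n = φ n' → φ (k * n + i) = φ (k * n' + i)) ∧
        ∀ n, a n = τ (φ n) := by
  constructor
  · rintro ⟨S, _, δ, s₀, τ, h⟩
    refine ⟨Option S, inferInstance,
      fun n => if n = 0 then none else some (run δ s₀ (kRepr k n)),
      fun x => τ (x.getD s₀), ?_, ?_⟩
    · intro n n' i hi hn
      by_cases h0 : n = 0 <;> by_cases h0' : n' = 0
      · rw [h0, h0']
      · simp [h0, h0'] at hn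
      · simp [h0, h0'] at hn
      · have hne : ∀ m, m ≠ 0 → k * m + i ≠ 0 := fun m hm => by
          have := Nat.mul_ne_zero (by omega : k ≠ 0) hm
          omega
        simp only [h0, h0', if_false, Option.some.injEq] at hn
        simp only [hne n h0, hne n' h0', if_false, kRepr_mul_add hk hi (Or.inl h0),
          kRepr_mul_add hk hi (Or.inl h0'), Option.some.injEq]
        simp only [run, List.foldl_append] at hn ⊢
        rw [hn]
    · intro n
      rw [h n]
      by_cases h0 : n = 0
      · simp [h0, kRepr_zero, run]
      · simp [h0]
  · rintro ⟨X, _, φ, τ, hφ, h⟩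
    classical
    let δ : X → Fin k → X := fun x i =>
      if hx : ∃ n, φ n = x then φ (k * hx.choose + i) else x
    have hδ : ∀ n (i : Fin k), δ (φ n) i = φ (k * n + i) := by
      intro n i
      have hx : ∃ m, φ m = φ n := ⟨n, rfl⟩
      simp only [δ, hx, dif_pos]
      exact hφ _ _ _ i.2 hx.choose_spec
    have hrun : ∀ n, run δ (φ 0) (kRepr k n) = φ n := by
      intro n
      induction n using Nat.strong_induction_on with
      | _ n ih =>
        rcases Nat.eq_zero_or_pos n with rfl | hn
        · simp [kRepr_zero, run]
        · have hmod : n % k < k := Nat.mod_lt _ (by omega)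
          have hdiv : k * (n / k) + n % k = n := Nat.div_add_mod n k
          have hne : n / k ≠ 0 ∨ n % k ≠ 0 := by
            by_contra! hc
            rw [hc.1, hc.2] at hdiv
            omega
          have key := kRepr_mul_add hk hmod hne
          rw [hdiv] at key
          have ih' := ih (n / k) (Nat.div_lt_self hn hk)
          simp only [run] at ih'
          rw [key, run, List.foldl_append, ih']
          simp [hδ, hdiv]
    exact ⟨X, Fintype.ofFinite X, δ, φ 0, τ, fun n => by rw [hrun, h]⟩

theorem coloring_pow_mul_add {X : Type*} {k : ℕ} (hk : 2 ≤ k) {φ : ℕ → X}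
    (hφ : ∀ n n' i, i < k → φ n = φ n' → φ (k * n + i) = φ (k * n' + i))
    {n n' : ℕ} (h : φ n = φ n') (m : ℕ) {r : ℕ} (hr : r < k ^ m) :
    φ (k ^ m * n + r) = φ (k ^ m * n' + r) := by
  induction m generalizing r with
  | zero => simpa [Nat.lt_one_iff.mp (by simpa using hr)] using h
  | succ m ih =>
    have hdiv : r / k < k ^ m := by
      apply Nat.div_lt_of_lt_mul
      rwa [pow_succ'] at hr
    have split : ∀ x, k ^ (m + 1) * x + r = k * (k ^ m * x + r / k) + r % k := fun x => by
      conv_lhs => rw [← Nat.div_add_mod r k]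
      ring
    rw [split n, split n']
    exact hφ _ _ _ (Nat.mod_lt _ (by omega)) (ih hdiv)

theorem IsAutomatic.of_pow {Ω : Type*} {k s : ℕ} (hk : 2 ≤ k) (hs : s ≠ 0) {a : ℕ → Ω}
    (h : IsAutomatic (k ^ s) a) : IsAutomatic k a := by
  have hks : 2 ≤ k ^ s := hk.trans (Nat.le_self_pow hs k)
  obtain ⟨X, _, φ, τ, hφ, ha⟩ := (isAutomatic_iff_exists_coloring hks a).1 h
  refine (isAutomatic_iff_exists_coloring hk a).2
    ⟨Fin s × Fin (k ^ s) → Option X, inferInstance,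
      fun n p => if (p.2 : ℕ) < k ^ (p.1 : ℕ) then some (φ (k ^ (p.1 : ℕ) * n + p.2)) else none,
      fun x => ((x (⟨0, Nat.pos_of_ne_zero hs⟩, ⟨0, by omega⟩)).map τ).getD (τ (φ 0)), ?_, ?_⟩
  · intro n n' i hi hn
    have hn' : ∀ j < s, ∀ r < k ^ j, φ (k ^ j * n + r) = φ (k ^ j * n' + r) := by
      intro j hj r hr
      have hr' : r < k ^ s := hr.trans_le (Nat.pow_le_pow_right (by omega) hj.le)
      simpa [hr] using congrFun hn (⟨j, hj⟩, ⟨r, hr'⟩)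
    funext ⟨⟨j, hj⟩, ⟨r, hr'⟩⟩
    by_cases hr : r < k ^ j
    · have hlt : k ^ j * i + r < k ^ (j + 1) := by
        have : k ^ j * (i + 1) ≤ k ^ j * k := Nat.mul_le_mul_left _ hi
        rw [pow_succ]
        linarith
      have split : ∀ x, k ^ j * (k * x + i) + r = k ^ (j + 1) * x + (k ^ j * i + r) :=
        fun x => by ring
      simp only [hr, if_true, split]
      rcases Nat.lt_or_ge (j + 1) s with hjs | hjs
      · rw [hn' _ hjs _ hlt]
      · obtain rfl : j + 1 = s := by omega
        have h0 := hn' 0 (by omega) 0 (by simp)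
        rw [hφ n n' _ hlt (by simpa using h0)]
    · simp [hr]
  · intro n
    simp [ha n]

end Automatic

section Density

theorem eventually_card_lt_of_upperDensity_eq_zero {A : Set ℕ} (hA : upperDensity A = 0)
    {ε : ℝ} (hε : 0 < ε) :
    ∀ᶠ n : ℕ in atTop, (Nat.card ↥(A ∩ Set.Iio n) : ℝ) < ε * n := by
  have hbdd : IsBoundedUnder (· ≤ ·) atTop
      (fun n : ℕ => (Nat.card ↥(A ∩ Set.Iio n) : ℝ) / n) := by
    refine isBoundedUnder_of ⟨1, fun n => ?_⟩
    have hcard : Nat.card ↥(A ∩ Set.Iio n) ≤ n := by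
      simpa using Nat.card_mono (Set.finite_Iio n) (Set.inter_subset_right (s := A))
    exact div_le_one_of_le₀ (by exact_mod_cast hcard) (Nat.cast_nonneg n)
  have hlt : limsup (fun n : ℕ => (Nat.card ↥(A ∩ Set.Iio n) : ℝ) / n) atTop < ε := by
    change upperDensity A < ε
    rwa [hA]
  filter_upwards [eventually_lt_of_limsup_lt hlt hbdd, eventually_gt_atTop 0] with n hn hpos
  rwa [div_lt_iff₀ (by exact_mod_cast hpos)] at hn

/-- If `log k / log l` is irrational, the quotients `k ^ m / l ^ t` with `m` large are dense
in the positive reals. -/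
theorem exists_pow_div_pow_mem_Ioo {k l : ℕ} (hk : 2 ≤ k) (hl : 2 ≤ l)
    (hirr : Irrational (Real.log k / Real.log l)) {p q : ℝ} (hp : 0 < p) (hpq : p < q) (M : ℕ) :
    ∃ m t : ℕ, M ≤ m ∧ p * (l : ℝ) ^ t < (k : ℝ) ^ m ∧ (k : ℝ) ^ m < q * (l : ℝ) ^ t := by
  have hlogk : 0 < Real.log k := Real.log_pos (by exact_mod_cast hk)
  have hlogl : 0 < Real.log l := Real.log_pos (by exact_mod_cast hl)
  have : Fact (0 < Real.log l) := ⟨hlogl⟩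
  have hdense := AddCircle.denseRange_zsmul_coe_iff.2 hirr
  have hq : 0 < q := hp.trans hpq
  obtain ⟨c, hc⟩ := exists_between (Real.log_lt_log hp hpq)
  have hcluster : MapClusterPt (c : AddCircle (Real.log l)) atTop
      (fun n : ℕ => n • (Real.log k : AddCircle (Real.log l))) :=
    ((mapClusterPt_atTop_nsmul_tfae (c : AddCircle (Real.log l)) _).out 0 3).2 (hdense _)
  have hnhds : ((↑) : ℝ → AddCircle (Real.log l)) '' Set.Ioo (Real.log p) (Real.log q) ∈
      𝓝 (c : AddCircle (Real.log l)) :=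
    (QuotientAddGroup.isOpenMap_coe _ isOpen_Ioo).mem_nhds ⟨c, hc, rfl⟩
  obtain ⟨M', hM'⟩ := exists_nat_gt (Real.log q / Real.log k)
  obtain ⟨m, hm, x, ⟨hxp, hxq⟩, hx⟩ :=
    frequently_atTop.1 (mapClusterPt_iff_frequently.1 hcluster _ hnhds) (max M M')
  have hmM : M ≤ m := (le_max_left _ _).trans hm
  have hmM' : (M' : ℝ) ≤ m := by exact_mod_cast (le_max_right _ _).trans hm
  have hx' : (x : AddCircle (Real.log l)) = ((m * Real.log k : ℝ) : AddCircle (Real.log l)) := by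
    rw [hx, ← nsmul_eq_mul, AddCircle.coe_nsmul]
  obtain ⟨z, hz⟩ : ∃ z : ℤ, z • Real.log l = m * Real.log k - x := by
    rw [← AddCircle.coe_eq_zero_iff, AddCircle.coe_sub, hx', sub_self]
  rw [zsmul_eq_mul] at hz
  have hqm : Real.log q < m * Real.log k := by
    rw [div_lt_iff₀ hlogk] at hM'
    exact hM'.trans_le (by gcongr)
  have hz0 : 0 ≤ z := by
    have hpos : (0 : ℝ) < z * Real.log l := by linarith
    exact_mod_cast (pos_of_mul_pos_left hpos hlogl.le).le
  lift z to ℕ using hz0 with t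
  have hk0 : (0 : ℝ) < k := by positivity
  have hl0 : (0 : ℝ) < l := by positivity
  rw [Int.cast_natCast] at hz
  refine ⟨m, t, hmM, ?_, ?_⟩
  · rw [← Real.log_lt_log_iff (by positivity) (by positivity),
      Real.log_mul hp.ne' (by positivity), Real.log_pow, Real.log_pow]
    linarith
  · rw [← Real.log_lt_log_iff (by positivity) (by positivity),
      Real.log_mul hq.ne' (by positivity), Real.log_pow, Real.log_pow]
    linarith

theorem irrational_log_div_log {k l : ℕ} (hk : 2 ≤ k) (hl : 2 ≤ l)
    (h : ∀ i j : ℕ, k ^ i = l ^ j → i = 0) : Irrational (Real.log k / Real.log l) := by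
  have hlogk : 0 < Real.log k := Real.log_pos (by exact_mod_cast hk)
  have hlogl : 0 < Real.log l := Real.log_pos (by exact_mod_cast hl)
  have hk0 : (0 : ℝ) < k := by positivity
  have hl0 : (0 : ℝ) < l := by positivity
  rintro ⟨r, hr⟩
  have hr0 : 0 < r := by
    have : (0 : ℝ) < r := hr ▸ div_pos hlogk hlogl
    exact_mod_cast this
  have hnum : ((r.num.toNat : ℕ) : ℝ) = (r.num : ℝ) := by
    exact_mod_cast congrArg (Int.cast (R := ℝ)) (Int.toNat_of_nonneg (Rat.num_pos.2 hr0).le)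
  have hden : (r.den : ℝ) ≠ 0 := by exact_mod_cast r.den_ne_zero
  rw [Rat.cast_def, div_eq_div_iff hden hlogl.ne'] at hr
  refine r.den_ne_zero (h r.den r.num.toNat ?_)
  have hpow : (k : ℝ) ^ r.den = (l : ℝ) ^ r.num.toNat := by
    apply Real.log_injOn_pos (Set.mem_Ioi.2 (by positivity)) (Set.mem_Ioi.2 (by positivity))
    rw [Real.log_pow, Real.log_pow, hnum]
    linarith
  exact_mod_cast hpow

end Density

section DigitParity

/-- The parity of `specialDigitCount`. -/
def specialDigitParity (n : ℕ) : ZMod 2 := specialDigitCount n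

theorem specialDigitParity_mul_add (n : ℕ) {r : ℕ} (hr : r < 9) :
    specialDigitParity (9 * n + r) = specialDigitParity n + specialDigitParity r := by
  have hdig : ∀ n r : ℕ, r < 9 → specialDigitCount (9 * n + r) =
      (if r ∈ ([2, 3, 4, 6, 7] : List ℕ) then 1 else 0) + specialDigitCount n := by
    intro n r hr
    by_cases h : r ≠ 0 ∨ n ≠ 0
    · rw [add_comm, specialDigitCount, Nat.digits_add 9 (by norm_num) r n hr h,
        List.filter_cons, specialDigitCount]
      split_ifs <;> simp_all [add_comm]
    · push Not at h
      simp [h.1, h.2]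
  have h0 := hdig 0 r hr
  have hn := hdig n r hr
  rw [mul_zero, zero_add] at h0
  simp only [specialDigitParity, h0, hn]
  simp [specialDigitCount, add_comm]

theorem specialDigitParity_pow_mul_add (t u : ℕ) {v : ℕ} (hv : v < 9 ^ t) :
    specialDigitParity (9 ^ t * u + v) = specialDigitParity u + specialDigitParity v := by
  induction t generalizing v with
  | zero =>
    obtain rfl : v = 0 := by simpa using hv
    simp [specialDigitParity, specialDigitCount]
  | succ t ih =>
    have hdiv : v / 9 < 9 ^ t := by
      apply Nat.div_lt_of_lt_mul
      rwa [pow_succ'] at hv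
    have hmod : v % 9 < 9 := Nat.mod_lt _ (by norm_num)
    have split : 9 ^ (t + 1) * u + v = 9 * (9 ^ t * u + v / 9) + v % 9 := by
      conv_lhs => rw [← Nat.div_add_mod v 9]
      ring
    rw [split, specialDigitParity_mul_add _ hmod, ih hdiv, add_assoc,
      ← specialDigitParity_mul_add _ hmod, Nat.div_add_mod]

/-- The parity cannot be nearly invariant, on a long interval, under a shift by `9 ^ t * E + w`
with `w / 9 ^ t` bounded away from `0` and `1`: here `B` collects the exceptions to invariance. -/
theorem not_specialDigitParity_shift_invariant {t E w P K : ℕ} (ht : t ≠ 0)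
    (hw₁ : 9 ^ t < 4 * w) (hw₂ : 4 * w < 3 * 9 ^ t) (hK : 20 * 9 ^ t ≤ K)
    (B : Finset ℕ) (hB : 8 * B.card < 9 ^ t) :
    ¬ ∀ x, P ≤ x → x < P + K → x ∉ B →
      specialDigitParity x = specialDigitParity (x + (9 ^ t * E + w)) := by
  intro hinv
  set Q := 9 ^ t
  have hQ9 : 9 ≤ Q := Nat.le_self_pow ht 9
  have havoid : ∀ a b : ℕ, Q ≤ 8 * (b - a) → ∃ v, a ≤ v ∧ v < b ∧ ∀ u, v < Q → Q * u + v ∉ B := by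
    intro a b hab
    have hcard : (B.image (· % Q)).card < (Finset.Ico a b).card := by
      rw [Nat.card_Ico]
      have := Finset.card_image_le (s := B) (f := (· % Q))
      omega
    obtain ⟨v, hv, hvB⟩ := Finset.exists_mem_notMem_of_card_lt_card hcard
    rw [Finset.mem_Ico] at hv
    refine ⟨v, hv.1, hv.2, fun u hvQ hmem => hvB (Finset.mem_image.2 ⟨_, hmem, ?_⟩)⟩
    simp [Nat.mod_eq_of_lt hvQ]
  obtain ⟨v₁, -, hv₁, hgood₁⟩ := havoid 0 (Q / 4) (by omega)
  obtain ⟨v₂, hv₂, hv₂', hgood₂⟩ := havoid (Q - Q / 4) Q (by omega)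
  set U := P / Q + 1
  have hwindow : ∀ u v, U ≤ u → u ≤ U + 18 → v < Q → P ≤ Q * u + v ∧ Q * u + v < P + K := by
    intro u v hu hu' hv
    have h₁ := Nat.div_add_mod P Q
    have h₂ := Nat.mod_lt P (by omega : Q > 0)
    have h₅ := Nat.mul_div_le P Q
    have h₃ : Q * (P / Q + 1) ≤ Q * u := Nat.mul_le_mul_left _ hu
    have h₄ : Q * u ≤ Q * (P / Q + 1 + 18) := Nat.mul_le_mul_left _ hu'
    rw [mul_add] at h₃ h₄
    constructor <;> linarith
  clear_value U
  have hlow : ∀ u, U ≤ u → u ≤ U + 18 → specialDigitParity u + specialDigitParity v₁ =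
      specialDigitParity (u + E) + specialDigitParity (v₁ + w) := by
    intro u hu hu'
    have hv : v₁ < Q := by omega
    obtain ⟨h₁, h₂⟩ := hwindow u v₁ hu hu' hv
    have key := hinv _ h₁ h₂ (hgood₁ u hv)
    rw [show Q * u + v₁ + (Q * E + w) = Q * (u + E) + (v₁ + w) by ring] at key
    rwa [specialDigitParity_pow_mul_add t u hv,
      specialDigitParity_pow_mul_add t (u + E) (by omega)] at key
  have hhigh : ∀ u, U ≤ u → u ≤ U + 18 → specialDigitParity u + specialDigitParity v₂ =
      specialDigitParity (u + E + 1) + specialDigitParity (v₂ + w - Q) := by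
    intro u hu hu'
    obtain ⟨h₁, h₂⟩ := hwindow u v₂ hu hu' hv₂'
    have key := hinv _ h₁ h₂ (hgood₂ u hv₂')
    have hcarry : Q * u + v₂ + (Q * E + w) = Q * (u + E + 1) + (v₂ + w - Q) := by
      have : v₂ + w = Q + (v₂ + w - Q) := by omega
      linarith
    rw [hcarry] at key
    rwa [specialDigitParity_pow_mul_add t u hv₂',
      specialDigitParity_pow_mul_add t (u + E + 1) (by omega)] at key
  obtain ⟨z, u, hz, hu, hu'⟩ : ∃ z u, u + E = 9 * z ∧ U ≤ u ∧ u + 1 ≤ U + 18 :=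
    ⟨(U + E) / 9 + 1, 9 * ((U + E) / 9 + 1) - E, by omega, by omega, by omega⟩
  have h₁ := hlow u hu (by omega)
  have h₂ := hlow (u + 1) (by omega) hu'
  have h₃ := hhigh u hu (by omega)
  have h₄ := hhigh (u + 1) (by omega) hu'
  rw [show u + 1 + E = 9 * z + 1 by omega] at h₂ h₄
  rw [hz] at h₁ h₃
  have d₀ := specialDigitParity_mul_add z (r := 0) (by norm_num)
  have d₁ := specialDigitParity_mul_add z (r := 1) (by norm_num)
  have d₂ := specialDigitParity_mul_add z (r := 2) (by norm_num)
  have e₀ : specialDigitParity 0 = 0 := by simp [specialDigitParity, specialDigitCount]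
  have e₁ : specialDigitParity 1 = 0 := by simp [specialDigitParity, specialDigitCount]
  have e₂ : specialDigitParity 2 = 1 := by simp [specialDigitParity, specialDigitCount]
  rw [e₀, add_zero, add_zero] at d₀
  rw [e₁, add_zero] at d₁
  rw [e₂] at d₂
  rw [d₀] at h₁
  rw [d₁] at h₂ h₃
  rw [show 9 * z + 1 + 1 = 9 * z + 2 by ring, d₂] at h₄
  have : (1 : ZMod 2) = 0 := by linear_combination h₂ - h₁ + h₃ - h₄
  exact one_ne_zero this

end DigitParity

section Main

/-- No `k`-automatic sequence determines `specialDigitParity` outside a set of density zero,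
unless `k` is a power of `3`. -/
theorem not_specialDigitParity_of_coloring {X : Type*} [Finite X] {k : ℕ} (hk : 2 ≤ k)
    (hk3 : ∀ s, k ≠ 3 ^ s) {φ : ℕ → X}
    (hφ : ∀ n n' i, i < k → φ n = φ n' → φ (k * n + i) = φ (k * n' + i))
    {A : Set ℕ} (hA : upperDensity A = 0) :
    ¬ ∀ n n', n ∉ A → n' ∉ A → φ n = φ n' → specialDigitParity n = specialDigitParity n' := by
  intro hpar
  have hirr : Irrational (Real.log k / Real.log (9 : ℕ)) := by
    refine irrational_log_div_log hk (by norm_num) fun i j hij => ?_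
    by_contra hi
    have hdvd : k ∣ 3 ^ (2 * j) := by
      rw [pow_mul, show 3 ^ 2 = 9 by norm_num, ← hij]
      exact dvd_pow_self k hi
    obtain ⟨s, -, hs⟩ := (Nat.dvd_prime_pow Nat.prime_three).1 hdvd
    exact hk3 s hs
  obtain ⟨n₁, n₂, hlt, hcol⟩ : ∃ n₁ n₂, n₁ < n₂ ∧ φ n₁ = φ n₂ := by
    obtain ⟨x, y, hne, hxy⟩ := Finite.exists_ne_map_eq_of_infinite φ
    rcases lt_or_gt_of_ne hne with h | h
    exacts [⟨x, y, h, hxy⟩, ⟨y, x, h, hxy.symm⟩]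
  obtain ⟨d, hd⟩ := Nat.exists_eq_add_of_lt hlt
  set D := d + 1
  have hn₂ : n₂ = n₁ + D := by omega
  have hD0 : (0 : ℝ) < D := by positivity
  obtain ⟨N, hN⟩ := eventually_atTop.1 (eventually_card_lt_of_upperDensity_eq_zero hA
    (ε := 1 / (400 * (n₂ + 1))) (by positivity))
  obtain ⟨m, t, hm, hlow, hhigh⟩ := exists_pow_div_pow_mem_Ioo hk (by norm_num) hirr
    (p := (20 * D + 1 / 4) / D) (q := (20 * D + 3 / 4) / D) (by positivity)
    (by gcongr; norm_num) (N + 21)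
  have hlow' : (80 * D + 1) * 9 ^ t < 4 * (k ^ m * D) := by
    rw [div_mul_eq_mul_div, div_lt_iff₀ hD0] at hlow
    have : ((80 * D + 1) * 9 ^ t : ℝ) < 4 * (k ^ m * D) := by push_cast at hlow ⊢; linarith
    exact_mod_cast this
  have hhigh' : 4 * (k ^ m * D) < (80 * D + 3) * 9 ^ t := by
    rw [div_mul_eq_mul_div, lt_div_iff₀ hD0] at hhigh
    have : (4 * (k ^ m * D) : ℝ) < (80 * D + 3) * 9 ^ t := by push_cast at hhigh ⊢; linarith
    exact_mod_cast this
  have hkm : N + 21 < k ^ m := hm.trans_lt (Nat.lt_pow_self hk)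
  have hKlow : 20 * 9 ^ t ≤ k ^ m := by
    refine Nat.le_of_mul_le_mul_right (c := D) ?_ (by omega)
    nlinarith [Nat.zero_le (9 ^ t)]
  have hKhigh : k ^ m < 21 * 9 ^ t := by
    refine Nat.lt_of_mul_lt_mul_right (a := D) ?_
    have : 9 ^ t ≤ D * 9 ^ t := Nat.le_mul_of_pos_left _ (by omega)
    nlinarith
  have ht : t ≠ 0 := by
    rintro rfl
    omega
  obtain ⟨w, hw⟩ : ∃ w, k ^ m * D = 9 ^ t * (20 * D) + w :=
    Nat.exists_eq_add_of_le (by nlinarith [Nat.zero_le (9 ^ t)])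
  classical
  set L := k ^ m * (n₂ + 1) with hL
  let G : Finset ℕ := (Finset.range L).filter (· ∈ A)
  have hG : (G.card : ℝ) < 1 / (400 * (n₂ + 1)) * L := by
    have hNL : N ≤ L := by
      rw [hL]
      exact le_trans (by omega) (Nat.le_mul_of_pos_right _ (Nat.succ_pos n₂))
    have hcard : Nat.card ↥(A ∩ Set.Iio L) = G.card := by
      have hset : A ∩ Set.Iio L = (G : Set ℕ) := by
        ext x
        simp [G, and_comm]
      rw [hset, Nat.card_coe_set_eq, Set.ncard_coe_finset]
    rw [← hcard]
    exact hN L hNL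
  have hG' : 400 * G.card < k ^ m := by
    have hLcast : (L : ℝ) = k ^ m * (n₂ + 1) := by rw [hL]; push_cast; ring
    have heq : 1 / (400 * ((n₂ : ℝ) + 1)) * L = k ^ m / 400 := by
      rw [hLcast]
      field_simp
    rw [heq, lt_div_iff₀ (by norm_num)] at hG
    have : ((400 * G.card : ℕ) : ℝ) < ((k ^ m : ℕ) : ℝ) := by push_cast; linarith
    exact_mod_cast this
  let B : Finset ℕ := G ∪ G.image (· - k ^ m * D)
  have hB : 8 * B.card < 9 ^ t := by
    have h₁ : B.card ≤ G.card + (G.image (· - k ^ m * D)).card := Finset.card_union_le _ _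
    have h₂ := Finset.card_image_le (s := G) (f := (· - k ^ m * D))
    omega
  refine not_specialDigitParity_shift_invariant (E := 20 * D) (w := w) (P := k ^ m * n₁) ht
    (by nlinarith) (by nlinarith) hKlow B hB fun x hx hx' hxB => ?_
  rw [← hw]
  obtain ⟨r, rfl⟩ := Nat.exists_eq_add_of_le hx
  have hr : r < k ^ m := by omega
  have hshift : k ^ m * n₁ + r + k ^ m * D = k ^ m * n₂ + r := by
    rw [hn₂]
    ring
  have hxL : k ^ m * n₂ + r < L := by
    rw [hL, mul_add, mul_one]
    omega
  refine hpar _ _ (fun hmem => hxB ?_) (fun hmem => hxB ?_) ?_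
  · exact Finset.mem_union_left _ (Finset.mem_filter.2 ⟨Finset.mem_range.2 (by omega), hmem⟩)
  · refine Finset.mem_union_right _ (Finset.mem_image.2
      ⟨_, Finset.mem_filter.2 ⟨Finset.mem_range.2 ?_, hmem⟩, Nat.add_sub_cancel _ _⟩)
    rwa [hshift]
  · rw [hshift]
    exact coloring_pow_mul_add hk hφ hcol m hr

end Main

/-- For `y ∈ {4, 8}`, the sequence `n ↦ [t₁₂(n!) = y]` is not `k`-automatic for any
`k ≥ 2`. Here one assumes as input the facts of Deshouillers–Ruzsa and Deshouillers:
(i) there is a `3`-automatic sequence `b` coinciding almost everywhere with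
`t₁₂(n!)`, where `b(n) = 4` if the digits `2,3,4,6,7` occur in total an even number
of times among the base-`9` digits of `n`, and `b(n) = 8` otherwise;
(ii) `n ↦ [t₁₂(n!) = y]` is not `3`-automatic for `y ∈ {4, 8}`. -/
theorem leastNonzeroDigit_factorial_not_automatic
    (hDR : ∃ b : ℕ → ℕ, IsAutomatic 3 b ∧
      (∀ n : ℕ, b n = if Even (specialDigitCount n) then 4 else 8) ∧
      upperDensity {n : ℕ | leastNonzeroDigit 12 (Nat.factorial n) ≠ b n} = 0)
    (hD3 : ∀ y ∈ ({4, 8} : Set ℕ), ¬ IsAutomatic 3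
      (fun n : ℕ => if leastNonzeroDigit 12 (Nat.factorial n) = y then 1 else 0)) :
    ∀ y ∈ ({4, 8} : Set ℕ), ∀ k : ℕ, 2 ≤ k → ¬ IsAutomatic k
      (fun n : ℕ => if leastNonzeroDigit 12 (Nat.factorial n) = y then 1 else 0) := by
  obtain ⟨b, -, hb, hA⟩ := hDR
  intro y hy k hk hauto
  by_cases hk3 : ∃ s, k = 3 ^ s
  · obtain ⟨s, rfl⟩ := hk3
    refine hD3 y hy (hauto.of_pow (by norm_num) ?_)
    rintro rfl
    norm_num at hk
  · push Not at hk3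
    obtain ⟨X, _, φ, τ, hφ, ha⟩ := (isAutomatic_iff_exists_coloring hk _).1 hauto
    refine not_specialDigitParity_of_coloring hk hk3 hφ hA fun n n' hn hn' hnn' => ?_
    simp only [Set.mem_ofPred_eq, not_not] at hn hn'
    have hiff := (ha n).trans ((congrArg τ hnn').trans (ha n').symm)
    simp only [hn, hn', hb] at hiff
    have heven : Even (specialDigitCount n) ↔ Even (specialDigitCount n') := by
      revert hiff
      rcases hy with rfl | rfl <;>
        by_cases h : Even (specialDigitCount n) <;>
        by_cases h' : Even (specialDigitCount n') <;> simp [h, h']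
    have hmod : specialDigitCount n % 2 = specialDigitCount n' % 2 := by
      rw [Nat.even_iff, Nat.even_iff] at heven
      omega
    exact (ZMod.natCast_eq_natCast_iff' _ _ 2).2 hmod
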